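/- Let d ≥ 1 and let μ, ν be Borel probability measures on ℝ^d with finite first moments. Then μ and ν are in convex order (μ ≼_c ν) if and only if C(μ,ρ) ≤ C(ν,ρ) for every Borel probability measure ρ on ℝ^d with bounded support. -/

import Mathlib

open MeasureTheory Metric RealInnerProductSpace

noncomputable section

/-- The set of couplings of two measures on `ℝ^d`. -/
def Couplings {d : ℕ} (α β : Measure (EuclideanSpace ℝ (Fin d))) :
    Set (Measure (EuclideanSpace ℝ (Fin d) × EuclideanSpace ℝ (Fin d))) :=
  {π | π.map Prod.fst = α ∧ π.map Prod.snd = β}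

/-- `C(α,β) = sup_{π ∈ Π(α,β)} ∫ ⟨x,y⟩ dπ`. -/
def OTcost {d : ℕ} (α β : Measure (EuclideanSpace ℝ (Fin d))) : ℝ :=
  sSup {r : ℝ | ∃ π ∈ Couplings α β, r = ∫ p, ⟪p.1, p.2⟫ ∂π}

/-- Convex order: `∫ f dμ ≤ ∫ f dν` for all convex `f` integrable w.r.t. both. -/
def ConvexOrder {d : ℕ} (μ ν : Measure (EuclideanSpace ℝ (Fin d))) : Prop :=
  ∀ f : EuclideanSpace ℝ (Fin d) → ℝ, ConvexOn ℝ Set.univ f →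
    Integrable f μ → Integrable f ν → ∫ x, f x ∂μ ≤ ∫ x, f x ∂ν


/-- log-sum-exp -/
def lse {ι : Type*} [Fintype ι] (u : ι → ℝ) : ℝ := Real.log (∑ j, Real.exp (u j))

section lse
set_option linter.unusedSectionVars false
variable {ι : Type*} [Fintype ι] [Nonempty ι]

lemma sum_exp_pos (u : ι → ℝ) : 0 < ∑ j, Real.exp (u j) :=
  Finset.sum_pos (fun _ _ => Real.exp_pos _) Finset.univ_nonempty

lemma lse_le_add (u v : ι → ℝ) (r : ℝ) (h : ∀ j, u j ≤ v j + r) : lse u ≤ lse v + r := by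
  unfold lse
  rw [← Real.log_exp r, ← Real.log_mul (sum_exp_pos v).ne' (Real.exp_pos _).ne']
  apply Real.log_le_log (sum_exp_pos u)
  rw [Finset.sum_mul]
  apply Finset.sum_le_sum
  intro j _
  rw [← Real.exp_add]
  exact Real.exp_le_exp.2 (h j)

lemma le_lse (u : ι → ℝ) (i : ι) : u i ≤ lse u := by
  unfold lse
  rw [Real.le_log_iff_exp_le (sum_exp_pos u)]
  exact Finset.single_le_sum (f := fun j => Real.exp (u j)) (fun j _ => (Real.exp_pos _).le)
    (Finset.mem_univ i)

lemma abs_lse_le (u : ι → ℝ) : |lse u| ≤ (∑ j, |u j|) + Real.log (Fintype.card ι) := by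
  have hj : ∀ j, |u j| ≤ ∑ j, |u j| := fun j =>
    Finset.single_le_sum (f := fun j => |u j|) (fun j _ => abs_nonneg _) (Finset.mem_univ j)
  have hc : 0 ≤ Real.log (Fintype.card ι) := Real.log_natCast_nonneg _
  have h1 := lse_le_add u (fun _ => 0) (∑ j, |u j|) (fun j => by
    have := le_abs_self (u j); have := hj j; linarith)
  have h0 : lse (fun _ : ι => (0:ℝ)) = Real.log (Fintype.card ι) := by simp [lse]
  obtain ⟨i⟩ := ‹Nonempty ι›
  have h2 := le_lse u i
  have h3 := neg_abs_le (u i)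
  have h4 := hj i
  rw [abs_le]
  constructor <;> linarith

lemma softmax_le_one (u : ι → ℝ) (i : ι) : Real.exp (u i) / ∑ j, Real.exp (u j) ≤ 1 := by
  rw [div_le_one (sum_exp_pos u)]
  exact Finset.single_le_sum (f := fun j => Real.exp (u j)) (fun j _ => (Real.exp_pos _).le)
    (Finset.mem_univ i)

lemma softmax_nonneg (u : ι → ℝ) (i : ι) : 0 ≤ Real.exp (u i) / ∑ j, Real.exp (u j) :=
  div_nonneg (Real.exp_pos _).le (sum_exp_pos u).le

lemma softmax_sum (u : ι → ℝ) : ∑ i, Real.exp (u i) / ∑ j, Real.exp (u j) = 1 := by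
  rw [← Finset.sum_div, div_self (sum_exp_pos u).ne']

/-- softmax average is almost the maximum -/
lemma softmax_avg (u : ι → ℝ) (k : ι) :
    u k - Fintype.card ι ≤ ∑ i, (Real.exp (u i) / ∑ j, Real.exp (u j)) * u i := by
  have h : ∀ i, (Real.exp (u i) / ∑ j, Real.exp (u j)) * (u k - u i) ≤ 1 := by
    intro i
    rcases le_total (u k) (u i) with h | h
    · have := mul_nonpos_of_nonneg_of_nonpos (softmax_nonneg u i) (sub_nonpos.2 h)
      linarith
    · have hS : Real.exp (u k) ≤ ∑ j, Real.exp (u j) :=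
        Finset.single_le_sum (f := fun j => Real.exp (u j)) (fun j _ => (Real.exp_pos _).le)
          (Finset.mem_univ k)
      rw [div_mul_eq_mul_div, div_le_one (sum_exp_pos u)]
      refine le_trans ?_ hS
      have h1 : u k - u i ≤ Real.exp (u k - u i) := by
        have := Real.add_one_le_exp (u k - u i); linarith
      calc _ ≤ Real.exp (u i) * Real.exp (u k - u i) :=
            mul_le_mul_of_nonneg_left h1 (Real.exp_pos _).le
        _ = _ := by rw [← Real.exp_add]; congr 1; ring
  have h2 := Finset.sum_le_sum (s := Finset.univ) fun i _ => h i
  simp only [mul_sub, Finset.sum_sub_distrib, ← Finset.sum_mul, softmax_sum] at h2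
  simp at h2
  linarith

variable {Ω : Type*} [MeasurableSpace Ω] (ν : Measure Ω) [IsProbabilityMeasure ν]

lemma lse_measurable (c : ι → Ω → ℝ) (hm : ∀ i, Measurable (c i)) (b : ι → ℝ) :
    Measurable (fun x => lse (fun j => c j x + b j)) := by
  unfold lse
  fun_prop

lemma lse_integrable (c : ι → Ω → ℝ) (hm : ∀ i, Measurable (c i)) (hc : ∀ i, Integrable (c i) ν)
    (b : ι → ℝ) : Integrable (fun x => lse (fun j => c j x + b j)) ν := by
  refine Integrable.mono' (g := fun x => (∑ j, |c j x + b j|) + Real.log (Fintype.card ι)) ?_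
    (lse_measurable c hm b).aestronglyMeasurable
    (Filter.Eventually.of_forall fun x => abs_lse_le _)
  refine Integrable.add (integrable_finsetSum _ fun j _ => ?_) (integrable_const _)
  exact ((hc j).add (integrable_const _)).abs

theorem softmax_exists (c : ι → Ω → ℝ) (hm : ∀ i, Measurable (c i))
    (hc : ∀ i, Integrable (c i) ν) (p : ι → ℝ) (hp : ∀ i, 0 < p i) (hp1 : ∑ i, p i = 1) :
    ∃ b : ι → ℝ, ∀ i,
      ∫ x, Real.exp (c i x + b i) / ∑ j, Real.exp (c j x + b j) ∂ν = p i := by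
  classical
  set Φ : (ι → ℝ) → ℝ := fun b => (∫ x, lse (fun j => c j x + b j) ∂ν) - ∑ i, p i * b i with hΦ
  have hIntg := lse_integrable ν c hm hc
  -- continuity
  have hcont : Continuous Φ := by
    refine Continuous.sub ?_ (by fun_prop)
    refine (LipschitzWith.of_le_add
      (f := fun b : ι → ℝ => ∫ x, lse (fun j => c j x + b j) ∂ν) ?_).continuous
    intro b b'
    have : ∫ x, lse (fun j => c j x + b j) ∂ν ≤
        ∫ x, (lse (fun j => c j x + b' j) + dist b b') ∂ν := by
      refine integral_mono (hIntg b) ((hIntg b').add (integrable_const _)) fun x => ?_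
      apply lse_le_add
      intro j
      have h1 := dist_le_pi_dist b b' j
      have h2 := le_abs_self (b j - b' j)
      rw [Real.dist_eq] at h1
      linarith
    rw [integral_add (hIntg b') (integrable_const _)] at this
    simpa using this
  -- shift invariance
  have hshift : ∀ b t, Φ (fun i => b i + t) = Φ b := by
    intro b t
    have h1 : ∀ x, lse (fun j => c j x + (b j + t)) = lse (fun j => c j x + b j) + t := by
      intro x
      apply le_antisymm
      · exact lse_le_add _ _ _ fun j => by linarith
      · have := lse_le_add (fun j => c j x + b j) (fun j => c j x + (b j + t)) (-t)
          fun j => by linarith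
        linarith
    simp only [hΦ, h1]
    rw [integral_add (hIntg b) (integrable_const _)]
    simp only [mul_add, Finset.sum_add_distrib, ← Finset.sum_mul, hp1]
    simp
  -- lower bound
  set K : ℝ := ∑ j, ∫ x, |c j x| ∂ν with hK
  have hlow : ∀ b i, b i - K - ∑ j, p j * b j ≤ Φ b := by
    intro b i
    have : ∫ x, (b i - ∑ j, |c j x|) ∂ν ≤ ∫ x, lse (fun j => c j x + b j) ∂ν := by
      refine integral_mono ((integrable_const _).sub
        (integrable_finsetSum _ fun j _ => (hc j).abs)) (hIntg b) fun x => ?_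
      have h1 := le_lse (fun j => c j x + b j) i
      have h2 := neg_abs_le (c i x)
      have h3 := Finset.single_le_sum (f := fun j => |c j x|) (fun j _ => abs_nonneg _)
        (Finset.mem_univ i)
      simp only at h1 h3 ⊢
      linarith
    rw [integral_sub (integrable_const _) (integrable_finsetSum _ fun j _ => (hc j).abs),
      integral_finsetSum _ fun j _ => (hc j).abs] at this
    simp at this
    simp only [hΦ, hK]
    linarith
  -- box
  obtain ⟨i₀, hi₀⟩ := Finite.exists_min p
  set R : ℝ := max 0 ((Φ 0 + K) / p i₀) with hR
  have hR0 : 0 ≤ R := le_max_left _ _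
  have hRm : Φ 0 + K ≤ p i₀ * R := by
    have := le_max_right 0 ((Φ 0 + K) / p i₀)
    rw [div_le_iff₀ (hp i₀)] at this
    linarith
  obtain ⟨b, hb, hbmin⟩ := (isCompact_Icc (a := fun _ : ι => -R) (b := 0)).exists_isMinOn
    ⟨0, by constructor <;> intro i <;> simp [hR0]⟩ hcont.continuousOn
  have hglob : ∀ b', Φ b ≤ Φ b' := by
    intro b'
    obtain ⟨m, hm'⟩ := Finite.exists_max b'
    rw [← hshift b' (-b' m)]
    set e : ι → ℝ := fun i => b' i + -b' m with he
    have he0 : ∀ i, e i ≤ 0 := fun i => by have := hm' i; simp [he]; linarith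
    by_cases h : ∀ i, -R ≤ e i
    · exact hbmin ⟨h, he0⟩
    · push Not at h
      obtain ⟨k, hk⟩ := h
      have h0 : Φ b ≤ Φ 0 := hbmin ⟨fun i => by simp [hR0], le_refl _⟩
      have h1 := hlow e m
      have hem : e m = 0 := by simp [he]
      have h2 : p k * (-e k) ≤ ∑ j, p j * (-e j) :=
        Finset.single_le_sum (f := fun j => p j * (-e j))
          (fun j _ => mul_nonneg (hp j).le (by linarith [he0 j])) (Finset.mem_univ k)
      have h3 : p i₀ * R ≤ p k * (-e k) :=
        mul_le_mul (hi₀ k) (by linarith) hR0 (hp k).le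
      simp only [mul_neg, Finset.sum_neg_distrib] at h2
      linarith
  refine ⟨b, fun i => ?_⟩
  -- derivative
  have hder := (hasDerivAt_integral_of_dominated_loc_of_deriv_le (μ := ν) (𝕜 := ℝ) (x₀ := (0:ℝ))
    (s := Set.univ)
    (F := fun t x => lse (fun j => c j x + (b j + t * (Pi.single i (1:ℝ) : ι → ℝ) j)))
    (F' := fun t x => Real.exp (c i x + (b i + t)) /
      ∑ j, Real.exp (c j x + (b j + t * (Pi.single i (1:ℝ) : ι → ℝ) j)))
    (bound := fun _ => 1) Filter.univ_mem
    (Filter.Eventually.of_forall fun t => (lse_measurable c hm _).aestronglyMeasurable)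
    (hIntg _) (Measurable.aestronglyMeasurable (by fun_prop)) ?_ (integrable_const _) ?_).2
  rotate_left
  · refine Filter.Eventually.of_forall fun x t _ => ?_
    have h1 := softmax_le_one (fun j => c j x + (b j + t * (Pi.single i (1:ℝ) : ι → ℝ) j)) i
    have h2 := softmax_nonneg (fun j => c j x + (b j + t * (Pi.single i (1:ℝ) : ι → ℝ) j)) i
    simp only [Pi.single_eq_same, mul_one] at h1 h2
    rw [Real.norm_eq_abs, abs_of_nonneg h2]
    exact h1
  · refine Filter.Eventually.of_forall fun x t _ => ?_
    unfold lse
    have h1 : HasDerivAt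
        (fun t : ℝ => ∑ j, Real.exp (c j x + (b j + t * (Pi.single i (1:ℝ) : ι → ℝ) j)))
        (∑ j, Real.exp (c j x + (b j + t * (Pi.single i (1:ℝ) : ι → ℝ) j)) *
          (Pi.single i (1:ℝ) : ι → ℝ) j) t := by
      refine HasDerivAt.fun_sum fun j _ => HasDerivAt.exp ?_
      refine HasDerivAt.const_add _ (HasDerivAt.const_add _ ?_)
      simpa using (hasDerivAt_id t).mul_const ((Pi.single i (1:ℝ) : ι → ℝ) j)
    have h2 := h1.log (sum_exp_pos _).ne'
    have h3 : ∑ j, Real.exp (c j x + (b j + t * (Pi.single i (1:ℝ) : ι → ℝ) j)) *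
          (Pi.single i (1:ℝ) : ι → ℝ) j = Real.exp (c i x + (b i + t)) := by
      rw [Finset.sum_eq_single i]
      · simp
      · intro j _ hj; simp [hj]
      · simp
    rw [h3] at h2
    exact h2
  have hder2 : HasDerivAt (fun t : ℝ => Φ (fun j => b j + t * (Pi.single i (1:ℝ) : ι → ℝ) j))
      ((∫ x, Real.exp (c i x + b i) / ∑ j, Real.exp (c j x + b j) ∂ν) - p i) 0 := by
    refine HasDerivAt.sub ?_ ?_
    · simpa using hder
    · have : (fun t : ℝ => ∑ k, p k * (b k + t * (Pi.single i (1:ℝ) : ι → ℝ) k)) =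
          fun t => (∑ k, p k * b k) + t * p i := by
        funext t
        simp only [mul_add, Finset.sum_add_distrib]
        congr 1
        rw [Finset.sum_eq_single i]
        · simp [mul_comm]
        · intro j _ hj; simp [hj]
        · simp
      rw [this]
      refine HasDerivAt.const_add _ ?_
      simpa using (hasDerivAt_id (0:ℝ)).mul_const (p i)
  have hmin : IsLocalMin (fun t : ℝ => Φ (fun j => b j + t * (Pi.single i (1:ℝ) : ι → ℝ) j)) 0 := by
    refine Filter.Eventually.of_forall fun t => ?_
    simpa using hglob _
  have := hmin.hasDerivAt_eq_zero hder2
  linarith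

end lse

section basics
set_option linter.unusedSectionVars false
variable {d : ℕ}


lemma exists_beta (S : Finset (EuclideanSpace ℝ (Fin d))) (β0 : (EuclideanSpace ℝ (Fin d)) → ℝ) :
    ∃ β : (EuclideanSpace ℝ (Fin d)) → ℝ, Measurable β ∧ (∃ C, ∀ y, ‖β y‖ ≤ C) ∧ ∀ s ∈ S, β s = β0 s := by
  classical
  refine ⟨fun y => ∑ s ∈ S, if y = s then β0 s else 0, ?_, ⟨∑ s ∈ S, |β0 s|, fun y => ?_⟩, ?_⟩
  · refine Finset.measurable_fun_sum _ fun s _ => ?_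
    exact Measurable.ite (measurableSet_singleton s) measurable_const measurable_const
  · refine (norm_sum_le _ _).trans (Finset.sum_le_sum fun s _ => ?_)
    split_ifs <;> simp
  · intro s hs
    simp [hs]

lemma beta_integrable (ρ : Measure (EuclideanSpace ℝ (Fin d))) [IsProbabilityMeasure ρ] {β : (EuclideanSpace ℝ (Fin d)) → ℝ} (hβ : Measurable β)
    (hb : ∃ C, ∀ y, ‖β y‖ ≤ C) : Integrable β ρ := by
  obtain ⟨C, hC⟩ := hb
  exact Integrable.of_bound hβ.aestronglyMeasurable C (Filter.Eventually.of_forall hC)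

lemma coupling_prob {α β : Measure (EuclideanSpace ℝ (Fin d))} [IsProbabilityMeasure α] {π : Measure ((EuclideanSpace ℝ (Fin d)) × (EuclideanSpace ℝ (Fin d)))}
    (h : π ∈ Couplings α β) : IsProbabilityMeasure π := by
  constructor
  have : (π.map Prod.fst) Set.univ = 1 := by rw [h.1]; exact measure_univ
  rwa [Measure.map_apply measurable_fst MeasurableSet.univ] at this

lemma coupling_fst {α β : Measure (EuclideanSpace ℝ (Fin d))} {π : Measure ((EuclideanSpace ℝ (Fin d)) × (EuclideanSpace ℝ (Fin d)))}
    (h : π ∈ Couplings α β) {f : (EuclideanSpace ℝ (Fin d)) → ℝ} (hf : Integrable f α) :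
    Integrable (fun p : (EuclideanSpace ℝ (Fin d)) × (EuclideanSpace ℝ (Fin d)) => f p.1) π ∧ ∫ p, f p.1 ∂π = ∫ x, f x ∂α := by
  have h1 := h.1
  subst h1
  exact ⟨hf.comp_measurable measurable_fst,
    (integral_map measurable_fst.aemeasurable hf.aestronglyMeasurable).symm⟩

lemma coupling_snd {α β : Measure (EuclideanSpace ℝ (Fin d))} {π : Measure ((EuclideanSpace ℝ (Fin d)) × (EuclideanSpace ℝ (Fin d)))}
    (h : π ∈ Couplings α β) {f : (EuclideanSpace ℝ (Fin d)) → ℝ} (hf : Integrable f β) :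
    Integrable (fun p : (EuclideanSpace ℝ (Fin d)) × (EuclideanSpace ℝ (Fin d)) => f p.2) π ∧ ∫ p, f p.2 ∂π = ∫ x, f x ∂β := by
  have h1 := h.2
  subst h1
  exact ⟨hf.comp_measurable measurable_snd,
    (integral_map measurable_snd.aemeasurable hf.aestronglyMeasurable).symm⟩

lemma coupling_snd_ae {α β : Measure (EuclideanSpace ℝ (Fin d))} {π : Measure ((EuclideanSpace ℝ (Fin d)) × (EuclideanSpace ℝ (Fin d)))}
    (h : π ∈ Couplings α β) {P : (EuclideanSpace ℝ (Fin d)) → Prop} (hP : ∀ᵐ y ∂β, P y) : ∀ᵐ p ∂π, P p.2 := by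
  have h1 := h.2
  subst h1
  exact ae_of_ae_map measurable_snd.aemeasurable hP

lemma ae_bdd {ρ : Measure (EuclideanSpace ℝ (Fin d))} {R : ℝ} (hR : ρ (closedBall (0 : (EuclideanSpace ℝ (Fin d))) R)ᶜ = 0) :
    ∀ᵐ y ∂ρ, ‖y‖ ≤ R := by
  rw [ae_iff]
  convert hR using 2
  ext y
  simp

lemma coupling_inner {α ρ : Measure (EuclideanSpace ℝ (Fin d))} (hα : Integrable (fun x => ‖x‖) α)
    {R : ℝ} (hR : ρ (closedBall (0 : (EuclideanSpace ℝ (Fin d))) R)ᶜ = 0)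
    {π : Measure ((EuclideanSpace ℝ (Fin d)) × (EuclideanSpace ℝ (Fin d)))} (h : π ∈ Couplings α ρ) :
    Integrable (fun p : (EuclideanSpace ℝ (Fin d)) × (EuclideanSpace ℝ (Fin d)) => ⟪p.1, p.2⟫) π ∧
      ∫ p, ⟪p.1, p.2⟫ ∂π ≤ (∫ x, ‖x‖ ∂α) * R := by
  have hb := coupling_snd_ae h (ae_bdd hR)
  have hi := (coupling_fst h hα)
  have hi2 : Integrable (fun p : (EuclideanSpace ℝ (Fin d)) × (EuclideanSpace ℝ (Fin d)) => ‖p.1‖ * R) π := hi.1.mul_const R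
  have hle : ∀ᵐ p ∂π, ‖(⟪p.1, p.2⟫ : ℝ)‖ ≤ ‖p.1‖ * R := by
    filter_upwards [hb] with p hp
    exact (norm_inner_le_norm _ _).trans (mul_le_mul_of_nonneg_left hp (norm_nonneg _))
  have hIntg : Integrable (fun p : (EuclideanSpace ℝ (Fin d)) × (EuclideanSpace ℝ (Fin d)) => (⟪p.1, p.2⟫ : ℝ)) π :=
    hi2.mono' (Measurable.aestronglyMeasurable (by fun_prop)) hle
  refine ⟨hIntg, ?_⟩
  rw [← hi.2, ← integral_mul_const]
  refine integral_mono_ae hIntg hi2 ?_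
  filter_upwards [hle] with p hp
  exact (Real.le_norm_self _).trans hp

lemma le_OTcost {α ρ : Measure (EuclideanSpace ℝ (Fin d))} (hα : Integrable (fun x => ‖x‖) α)
    {R : ℝ} (hR : ρ (closedBall (0 : (EuclideanSpace ℝ (Fin d))) R)ᶜ = 0)
    {π : Measure ((EuclideanSpace ℝ (Fin d)) × (EuclideanSpace ℝ (Fin d)))} (h : π ∈ Couplings α ρ) : ∫ p, ⟪p.1, p.2⟫ ∂π ≤ OTcost α ρ := by
  refine le_csSup ⟨(∫ x, ‖x‖ ∂α) * R, ?_⟩ ⟨π, h, rfl⟩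
  rintro r ⟨π', h', rfl⟩
  exact (coupling_inner hα hR h').2

lemma OTcost_le {α ρ : Measure (EuclideanSpace ℝ (Fin d))} [IsProbabilityMeasure α] [IsProbabilityMeasure ρ] {r : ℝ}
    (h : ∀ π ∈ Couplings α ρ, ∫ p, ⟪p.1, p.2⟫ ∂π ≤ r) : OTcost α ρ ≤ r := by
  refine csSup_le ⟨_, α.prod ρ, ⟨by simp, by simp⟩, rfl⟩ ?_
  rintro _ ⟨π, hπ, rfl⟩
  exact h π hπ

section maxaff
variable {ι : Type*} [Fintype ι] [Nonempty ι] (a : ι → (EuclideanSpace ℝ (Fin d))) (b : ι → ℝ)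

lemma le_maxaff (x : (EuclideanSpace ℝ (Fin d))) (i : ι) : ⟪x, a i⟫ + b i ≤ ⨆ i, (⟪x, a i⟫ + b i) :=
  le_ciSup (f := fun i => (⟪x, a i⟫ + b i : ℝ)) (Set.finite_range _).bddAbove i

lemma maxaff_convex : ConvexOn ℝ Set.univ (fun x : (EuclideanSpace ℝ (Fin d)) => ⨆ i, (⟪x, a i⟫ + b i)) := by
  refine ⟨convex_univ, fun x _ y _ s t hs ht hst => ciSup_le fun i => ?_⟩
  have h1 := mul_le_mul_of_nonneg_left (le_maxaff a b x i) hs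
  have h2 := mul_le_mul_of_nonneg_left (le_maxaff a b y i) ht
  rw [inner_add_left, real_inner_smul_left, real_inner_smul_left]
  simp only [smul_eq_mul]
  have : b i = s * b i + t * b i := by rw [← add_mul, hst, one_mul]
  linarith

lemma maxaff_measurable : Measurable (fun x : (EuclideanSpace ℝ (Fin d)) => ⨆ i, (⟪x, a i⟫ + b i)) :=
  Measurable.iSup fun i => by fun_prop

lemma inner_integrable' {α : Measure (EuclideanSpace ℝ (Fin d))} (hα : Integrable (fun x => ‖x‖) α) (s : (EuclideanSpace ℝ (Fin d))) :
    Integrable (fun x : (EuclideanSpace ℝ (Fin d)) => (⟪x, s⟫ : ℝ)) α :=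
  (hα.mul_const ‖s‖).mono' (Measurable.aestronglyMeasurable (by fun_prop))
    (Filter.Eventually.of_forall fun x => norm_inner_le_norm _ _)

lemma maxaff_integrable {α : Measure (EuclideanSpace ℝ (Fin d))} [IsProbabilityMeasure α]
    (hα : Integrable (fun x => ‖x‖) α) :
    Integrable (fun x : (EuclideanSpace ℝ (Fin d)) => ⨆ i, (⟪x, a i⟫ + b i)) α := by
  refine Integrable.mono' (g := fun x => ∑ i, |⟪x, a i⟫ + b i|) ?_
    (maxaff_measurable a b).aestronglyMeasurable (Filter.Eventually.of_forall fun x => ?_)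
  · exact integrable_finsetSum _ fun i _ => ((inner_integrable' hα _).add (integrable_const _)).abs
  · have hj : ∀ j, |⟪x, a j⟫ + b j| ≤ ∑ i, |⟪x, a i⟫ + b i| := fun j =>
      Finset.single_le_sum (f := fun i => |⟪x, a i⟫ + b i|) (fun j _ => abs_nonneg _)
        (Finset.mem_univ j)
    rw [Real.norm_eq_abs, abs_le]
    constructor
    · obtain ⟨i⟩ := ‹Nonempty ι›
      have h1 := le_maxaff a b x i
      have h2 := neg_abs_le (⟪x, a i⟫ + b i)
      have h3 := hj i
      linarith
    · exact ciSup_le fun i => (le_abs_self _).trans (hj i)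

end maxaff

lemma quant (ρ : Measure (EuclideanSpace ℝ (Fin d))) {R : ℝ} (hR : ρ (closedBall (0 : (EuclideanSpace ℝ (Fin d))) R)ᶜ = 0) {ε : ℝ} (hε : 0 < ε) :
    ∃ (S : Finset (EuclideanSpace ℝ (Fin d))) (g : (EuclideanSpace ℝ (Fin d)) → (EuclideanSpace ℝ (Fin d))), Measurable g ∧ (∀ᵐ y ∂ρ, g y ∈ S) ∧
      (∀ᵐ y ∂ρ, ‖y - g y‖ ≤ ε) ∧ ∀ s ∈ S, ρ (g ⁻¹' {s}) ≠ 0 := by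
  classical
  set e := TopologicalSpace.denseSeq (EuclideanSpace ℝ (Fin d)) with he
  have hd : DenseRange e := TopologicalSpace.denseRange_denseSeq (EuclideanSpace ℝ (Fin d))
  obtain ⟨t, ht⟩ := (isCompact_closedBall (0 : (EuclideanSpace ℝ (Fin d))) R).elim_finite_subcover
    (fun k => ball (e k) ε) (fun k => isOpen_ball) (fun y _ => by
      obtain ⟨k, hk⟩ := hd.exists_dist_lt y hε
      exact Set.mem_iUnion.2 ⟨k, hk⟩)
  set g := SimpleFunc.nearestPt e (t.sup id) with hg
  refine ⟨g.range.filter fun s => ρ (g ⁻¹' {s}) ≠ 0, g, g.measurable, ?_, ?_, ?_⟩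
  · have : ∀ᵐ y ∂ρ, ∀ s ∈ g.range, ρ (g ⁻¹' {s}) = 0 → g y ≠ s := by
      rw [Filter.eventually_all_finset]
      intro s _
      by_cases h : ρ (g ⁻¹' {s}) = 0
      · have : ∀ᵐ y ∂ρ, g y ≠ s := by
          rw [ae_iff]
          convert h using 2
          ext y; simp
        filter_upwards [this] with y hy _ using hy
      · exact Filter.Eventually.of_forall fun y h' => absurd h' h
    filter_upwards [this] with y hy
    rw [Finset.mem_filter]
    exact ⟨g.mem_range_self y, fun h => hy _ (g.mem_range_self y) h rfl⟩
  · filter_upwards [ae_bdd hR] with y hy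
    have := ht (by simpa using hy : y ∈ closedBall (0 : (EuclideanSpace ℝ (Fin d))) R)
    simp only [Set.mem_iUnion] at this
    obtain ⟨k, hk, hyk⟩ := this
    have h1 := SimpleFunc.edist_nearestPt_le e y (Finset.le_sup (f := id) hk)
    rw [edist_dist, edist_dist, ENNReal.ofReal_le_ofReal_iff dist_nonneg] at h1
    rw [mem_ball, dist_comm] at hyk
    rw [← dist_eq_norm, dist_comm]
    exact h1.trans hyk.le
  · intro s hs
    exact (Finset.mem_filter.1 hs).2

open ProbabilityTheory in
lemma exists_coupling {ι : Type*} [Fintype ι] (ν ρ : Measure (EuclideanSpace ℝ (Fin d)))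
    [IsProbabilityMeasure ν] [IsProbabilityMeasure ρ]
    (h : ι → (EuclideanSpace ℝ (Fin d)) → ℝ) (hm : ∀ i, Measurable (h i)) (h0 : ∀ i x, 0 ≤ h i x) (h1 : ∀ x, ∑ i, h i x = 1)
    (B : ι → Set (EuclideanSpace ℝ (Fin d))) (hBm : ∀ i, MeasurableSet (B i)) (hBd : Pairwise (Function.onFun Disjoint B))
    (hBu : ∀ᵐ y ∂ρ, y ∈ ⋃ i, B i) (hB0 : ∀ i, ρ (B i) ≠ 0)
    (hp : ∀ i, ∫ x, h i x ∂ν = ρ.real (B i)) :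
    ∃ π ∈ Couplings ν ρ, ∀ (G : (EuclideanSpace ℝ (Fin d)) × (EuclideanSpace ℝ (Fin d)) → ℝ) (g : ι → (EuclideanSpace ℝ (Fin d)) → ℝ), Integrable G π →
      (∀ i x y, y ∈ B i → G (x, y) = g i x) → ∫ p, G p ∂π = ∑ i, ∫ x, h i x * g i x ∂ν := by
  classical
  have hle : ∀ i x, h i x ≤ 1 := fun i x => by
    rw [← h1 x]
    exact Finset.single_le_sum (f := fun i => h i x) (fun i _ => h0 i x) (Finset.mem_univ i)
  have hIntg : ∀ i, Integrable (h i) ν := fun i =>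
    Integrable.of_bound (hm i).aestronglyMeasurable 1 (Filter.Eventually.of_forall fun x => by
      rw [Real.norm_eq_abs, abs_of_nonneg (h0 i x)]; exact hle i x)
  set D : ι → Measure (EuclideanSpace ℝ (Fin d)) := fun i => ν.withDensity (fun x => ENNReal.ofReal (h i x)) with hD
  have hDu : ∀ i, D i Set.univ = ρ (B i) := by
    intro i
    simp only [hD]
    rw [withDensity_apply _ MeasurableSet.univ, Measure.restrict_univ,
      ← ofReal_integral_eq_lintegral_ofReal (hIntg i) (Filter.Eventually.of_forall (h0 i)), hp i,
      ofReal_measureReal]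
  have hDf : ∀ i, IsFiniteMeasure (D i) := fun i => ⟨by rw [hDu]; exact measure_lt_top _ _⟩
  have hcp : ∀ i, IsProbabilityMeasure (ρ[|B i]) := fun i => cond_isProbabilityMeasure (hB0 i)
  refine ⟨∑ i, (D i).prod (ρ[|B i]), ⟨?_, ?_⟩, ?_⟩
  · rw [Measure.map_finset_sum' measurable_fst.aemeasurable]
    simp only [Measure.map_fst_prod, measure_univ, one_smul]
    ext A hA
    simp only [Measure.coe_finsetSum, Finset.sum_apply, hD, withDensity_apply _ hA]
    rw [← lintegral_finsetSum _ fun i _ => (hm i).ennreal_ofReal]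
    have : ∀ x, ∑ i, ENNReal.ofReal (h i x) = 1 := fun x => by
      rw [← ENNReal.ofReal_sum_of_nonneg fun i _ => h0 i x, h1 x, ENNReal.ofReal_one]
    simp [this]
  · rw [Measure.map_finset_sum' measurable_snd.aemeasurable]
    simp only [Measure.map_snd_prod, hDu]
    have : ∀ i, ρ (B i) • ρ[|B i] = ρ.restrict (B i) := fun i => by
      rw [ProbabilityTheory.cond, smul_smul, ENNReal.mul_inv_cancel (hB0 i) (measure_ne_top _ _),
        one_smul]
    simp only [this]
    rw [← Measure.sum_fintype, ← Measure.restrict_iUnion hBd hBm]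
    exact Measure.restrict_eq_self_of_ae_mem hBu
  · intro G g hG hGg
    rw [integrable_finsetSum_measure] at hG
    rw [integral_finsetSum_measure hG]
    refine Finset.sum_congr rfl fun i _ => ?_
    have hae : ∀ᵐ p ∂((D i).prod (ρ[|B i])), p.2 ∈ B i := by
      have : ∀ᵐ y ∂(ρ[|B i]), y ∈ B i := by
        refine Measure.ae_smul_measure ?_ _
        exact ae_restrict_mem (hBm i)
      exact Measure.quasiMeasurePreserving_snd.ae this
    have : ∫ p, G p ∂((D i).prod (ρ[|B i])) = ∫ p, g i p.1 ∂((D i).prod (ρ[|B i])) := by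
      refine integral_congr_ae ?_
      filter_upwards [hae] with p hp
      exact hGg i p.1 p.2 hp
    rw [this, integral_fun_fst]
    simp only [probReal_univ, one_smul, hD]
    rw [integral_withDensity_eq_integral_toReal_smul (hm i).ennreal_ofReal
      (Filter.Eventually.of_forall fun x => ENNReal.ofReal_lt_top)]
    refine integral_congr_ae (Filter.Eventually.of_forall fun x => ?_)
    simp [ENNReal.toReal_ofReal (h0 i x)]

end basics

section directions
variable {d : ℕ}

lemma int_comb {Ω : Type*} [MeasurableSpace Ω] {m : Measure Ω} {f g k : Ω → ℝ}
    (hf : Integrable f m) (hg : Integrable g m) (hk : Integrable k m) (c : ℝ) :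
    Integrable (fun p => f p - g p + c * k p) m ∧
    ∫ p, (f p - g p + c * k p) ∂m = ∫ p, f p ∂m - ∫ p, g p ∂m + c * ∫ p, k p ∂m := by
  have h1 : Integrable (fun p => f p - g p) m := hf.sub hg
  have h2 : Integrable (fun p => c * k p) m := hk.const_mul c
  refine ⟨h1.add h2, ?_⟩
  rw [integral_add h1 h2, integral_sub hf hg, integral_const_mul]

theorem forward_dir (μ ν : Measure (EuclideanSpace ℝ (Fin d)))
    [IsProbabilityMeasure μ] [IsProbabilityMeasure ν]
    (hμ : Integrable (fun x => ‖x‖) μ) (hν : Integrable (fun y => ‖y‖) ν)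
    (hord : ConvexOrder μ ν) (ρ : Measure (EuclideanSpace ℝ (Fin d))) [IsProbabilityMeasure ρ]
    {R : ℝ} (hR : ρ (closedBall (0 : EuclideanSpace ℝ (Fin d)) R)ᶜ = 0) :
    OTcost μ ρ ≤ OTcost ν ρ := by
  classical
  refine OTcost_le fun π hπ => ?_
  set Mμ := ∫ x, ‖x‖ ∂μ with hMμ
  set Mν := ∫ x, ‖x‖ ∂ν with hMν
  have hMμ0 : 0 ≤ Mμ := integral_nonneg fun x => norm_nonneg _
  have hMν0 : 0 ≤ Mν := integral_nonneg fun x => norm_nonneg _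
  suffices H : ∀ ε > 0, ∫ p, ⟪p.1, p.2⟫ ∂π ≤ OTcost ν ρ + ε * (Mμ + Mν + 1) by
    refine le_of_forall_pos_le_add fun ε hε => ?_
    have hM : 0 < Mμ + Mν + 1 := by linarith
    have := H (ε / (Mμ + Mν + 1)) (div_pos hε hM)
    rwa [div_mul_cancel₀ _ hM.ne'] at this
  intro ε hε
  obtain ⟨S, g, hgm, hgS, hgε, hS0⟩ := quant ρ hR hε
  have hSne : Nonempty S := by
    obtain ⟨y, hy⟩ := hgS.exists
    exact ⟨⟨g y, hy⟩⟩
  set N : ℝ := (Fintype.card S : ℝ) with hN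
  have hNpos : 0 < N := by simp only [hN]; exact_mod_cast Fintype.card_pos
  set δ : ℝ := ε / N with hδ
  have hδpos : 0 < δ := div_pos hε hNpos
  set B : S → Set (EuclideanSpace ℝ (Fin d)) := fun s => g ⁻¹' {(s : EuclideanSpace ℝ (Fin d))}
    with hB
  have hBm : ∀ i, MeasurableSet (B i) := fun i => hgm (measurableSet_singleton _)
  have hBd : Pairwise (Function.onFun Disjoint B) := by
    intro s t hst
    refine Set.disjoint_left.2 fun y hy hy' => hst ?_
    simp only [hB, Set.mem_preimage, Set.mem_singleton_iff] at hy hy'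
    exact Subtype.ext (hy.symm.trans hy')
  have hBu : ∀ᵐ y ∂ρ, y ∈ ⋃ i, B i := by
    filter_upwards [hgS] with y hy
    exact Set.mem_iUnion.2 ⟨⟨g y, hy⟩, rfl⟩
  have hB0 : ∀ i, ρ (B i) ≠ 0 := fun i => hS0 _ i.2
  have hpsum : ∑ i, ρ.real (B i) = 1 := by
    rw [← measureReal_iUnion_fintype hBd hBm]
    have : ρ (⋃ i, B i) = 1 := by
      rw [← measure_univ (μ := ρ)]
      exact measure_congr (Filter.eventuallyEq_univ.2 hBu)
    simp [Measure.real, this]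
  have hcm : ∀ i : S, Measurable (fun x : EuclideanSpace ℝ (Fin d) => (⟪x, (i : _)⟫ : ℝ) / δ) :=
    fun i => by fun_prop
  obtain ⟨b, hb⟩ := softmax_exists ν
    (fun (i : S) (x : EuclideanSpace ℝ (Fin d)) => (⟪x, (i : EuclideanSpace ℝ (Fin d))⟫ : ℝ) / δ)
    hcm (fun i => (inner_integrable' hν _).div_const _) (fun i => ρ.real (B i))
    (fun i => ENNReal.toReal_pos (hB0 i) (measure_ne_top _ _)) hpsum
  set u : S → EuclideanSpace ℝ (Fin d) → ℝ :=
    fun i x => (⟪x, (i : EuclideanSpace ℝ (Fin d))⟫ : ℝ) / δ + b i with hu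
  set h : S → EuclideanSpace ℝ (Fin d) → ℝ :=
    fun i x => Real.exp (u i x) / ∑ j, Real.exp (u j x) with hh
  have hum : ∀ i, Measurable (u i) := fun i => (hcm i).add_const _
  have hhm : ∀ i, Measurable (h i) := fun i => by simp only [hh]; fun_prop
  obtain ⟨π', hπ', hπG⟩ := exists_coupling ν ρ h hhm (fun i x => softmax_nonneg (fun j => u j x) i)
    (fun x => softmax_sum (fun j => u j x)) B hBm hBd hBu hB0 hb
  obtain ⟨β, hβm, hβb, hβS⟩ := exists_beta S (fun s => if hs : s ∈ S then δ * b ⟨s, hs⟩ else 0)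
  have hβS' : ∀ s : S, β s = δ * b s := fun s => by rw [hβS s s.2]; simp
  set F : EuclideanSpace ℝ (Fin d) → ℝ :=
    fun x => ⨆ i : S, (⟪x, (i : EuclideanSpace ℝ (Fin d))⟫ + δ * b i) with hF
  have hFμ : Integrable F μ := maxaff_integrable _ _ hμ
  have hFν : Integrable F ν := maxaff_integrable _ _ hν
  have hFle : ∫ x, F x ∂μ ≤ ∫ x, F x ∂ν := hord F (maxaff_convex _ _) hFμ hFν
  have hβg : Integrable (fun y => β (g y)) ρ :=
    beta_integrable ρ (hβm.comp hgm) (hβb.imp fun C hC y => hC _)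
  set K := ∫ y, β (g y) ∂ρ with hK
  -- upper bound for `μ`
  have hup : ∫ p, ⟪p.1, p.2⟫ ∂π ≤ ∫ x, F x ∂μ - K + ε * Mμ := by
    have i1 := coupling_fst hπ hFμ
    have i2 := coupling_snd hπ hβg
    have i3 := coupling_fst hπ hμ
    have : ∫ p, ⟪p.1, p.2⟫ ∂π ≤ ∫ p, (F p.1 - β (g p.2) + ε * ‖p.1‖) ∂π := by
      refine integral_mono_ae (coupling_inner hμ hR hπ).1
        (int_comb i1.1 i2.1 i3.1 ε).1 ?_
      filter_upwards [coupling_snd_ae hπ hgS, coupling_snd_ae hπ hgε] with p hp hp2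
      have h1 := le_maxaff (fun i : S => (i : EuclideanSpace ℝ (Fin d))) (fun i => δ * b i) p.1
        ⟨g p.2, hp⟩
      rw [← hβS' ⟨g p.2, hp⟩] at h1
      have h2 : (⟪p.1, p.2⟫ : ℝ) = ⟪p.1, g p.2⟫ + ⟪p.1, p.2 - g p.2⟫ := by
        rw [inner_sub_right]; ring
      have h3 : (⟪p.1, p.2 - g p.2⟫ : ℝ) ≤ ε * ‖p.1‖ := by
        refine (real_inner_le_norm _ _).trans ?_
        rw [mul_comm]
        exact mul_le_mul_of_nonneg_right hp2 (norm_nonneg _)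
      simp only [hF]
      simp only at h1
      linarith
    rw [(int_comb i1.1 i2.1 i3.1 ε).2, i1.2, i2.2, i3.2] at this
    exact this
  -- lower bound for `ν`
  have hlow : ∫ x, F x ∂ν - ε - K - ε * Mν ≤ ∫ p, ⟪p.1, p.2⟫ ∂π' := by
    have hprob := coupling_prob hπ'
    have i2 := coupling_snd hπ' hβg
    have i3 := coupling_fst hπ' hν
    have i4 : Integrable (fun p : (EuclideanSpace ℝ (Fin d)) × (EuclideanSpace ℝ (Fin d)) =>
        (⟪p.1, g p.2⟫ : ℝ)) π' := by
      have i5 : Integrable (fun p : (EuclideanSpace ℝ (Fin d)) × (EuclideanSpace ℝ (Fin d)) =>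
        ‖p.1‖ * (R + ε)) π' := i3.1.mul_const _
      refine i5.mono' (Measurable.aestronglyMeasurable (by fun_prop)) ?_
      filter_upwards [coupling_snd_ae hπ' hgε, coupling_snd_ae hπ' (ae_bdd hR)] with p hp hp2
      refine (norm_inner_le_norm _ _).trans (mul_le_mul_of_nonneg_left ?_ (norm_nonneg _))
      have := norm_sub_norm_le (g p.2) p.2
      rw [norm_sub_rev] at this
      linarith
    have i6 : Integrable (fun p : (EuclideanSpace ℝ (Fin d)) × (EuclideanSpace ℝ (Fin d)) =>
        (⟪p.1, g p.2⟫ : ℝ) + β (g p.2)) π' := i4.add i2.1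
    have hval := hπG (fun p => ⟪p.1, g p.2⟫ + β (g p.2)) (fun i x => δ * u i x) i6 (by
      intro i x y hy
      have hy' : g y = i := hy
      simp only [hy', hβS', hu]
      field_simp)
    have hhu : ∀ i, Integrable (fun x => h i x * (δ * u i x)) ν := by
      intro i
      have : Integrable (fun x => δ * u i x) ν :=
        (((inner_integrable' hν _).div_const _).add (integrable_const _)).const_mul _
      refine this.norm.mono' (Measurable.aestronglyMeasurable (by fun_prop))
        (Filter.Eventually.of_forall fun x => ?_)
      rw [norm_mul, Real.norm_eq_abs, abs_of_nonneg (softmax_nonneg (fun j => u j x) i)]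
      exact mul_le_of_le_one_left (norm_nonneg _) (softmax_le_one (fun j => u j x) i)
    rw [← integral_finsetSum _ fun i _ => hhu i] at hval
    have hge : ∫ x, (F x - ε) ∂ν ≤ ∫ x, ∑ i, h i x * (δ * u i x) ∂ν := by
      refine integral_mono (hFν.sub (integrable_const _))
        (integrable_finsetSum _ fun i _ => hhu i) fun x => ?_
      simp only [hF]
      rw [sub_le_iff_le_add]
      refine ciSup_le fun k => ?_
      have h1 := mul_le_mul_of_nonneg_left (softmax_avg (fun j => u j x) k) hδpos.le
      have h2 : δ * N = ε := by rw [hδ]; field_simp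
      have h3 : δ * u k x = ⟪x, (k : EuclideanSpace ℝ (Fin d))⟫ + δ * b k := by
        simp only [hu]; field_simp
      have h4 : ∑ i, h i x * (δ * u i x) =
          δ * ∑ i, (Real.exp (u i x) / ∑ j, Real.exp (u j x)) * u i x := by
        rw [Finset.mul_sum]
        refine Finset.sum_congr rfl fun i _ => ?_
        simp only [hh]; ring
      rw [h4]
      rw [mul_sub, ← hN, h2, h3] at h1
      linarith
    rw [integral_sub hFν (integrable_const _)] at hge
    simp only [integral_const, probReal_univ, one_smul] at hge
    have : ∫ p, (((⟪p.1, g p.2⟫ : ℝ) + β (g p.2)) - β (g p.2) + (-ε) * ‖p.1‖) ∂π' ≤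
        ∫ p, ⟪p.1, p.2⟫ ∂π' := by
      refine integral_mono_ae (int_comb i6 i2.1 i3.1 (-ε)).1
        (coupling_inner hν hR hπ').1 ?_
      filter_upwards [coupling_snd_ae hπ' hgε] with p hp2
      have h2 : (⟪p.1, g p.2⟫ : ℝ) = ⟪p.1, p.2⟫ + -⟪p.1, p.2 - g p.2⟫ := by
        rw [inner_sub_right]; ring
      have h3 : -(⟪p.1, p.2 - g p.2⟫ : ℝ) ≤ ε * ‖p.1‖ := by
        refine (neg_le_abs _).trans ((abs_real_inner_le_norm _ _).trans ?_)
        rw [mul_comm]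
        exact mul_le_mul_of_nonneg_right hp2 (norm_nonneg _)
      linarith
    have e1 : ∫ p, (((⟪p.1, g p.2⟫ : ℝ) + β (g p.2)) - β (g p.2) + (-ε) * ‖p.1‖) ∂π' =
        (∫ p, ((⟪p.1, g p.2⟫ : ℝ) + β (g p.2)) ∂π') - K - ε * Mν := by
      rw [(int_comb i6 i2.1 i3.1 (-ε)).2, i2.2, i3.2]
      ring
    rw [e1, hval] at this
    linarith
  have hfin := le_OTcost hν hR hπ'
  have : ε * (Mμ + Mν + 1) = ε * Mμ + ε * Mν + ε := by ring
  linarith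

/-- Finite maxima of affine functions. -/
theorem backward_fin (μ ν : Measure (EuclideanSpace ℝ (Fin d)))
    [IsProbabilityMeasure μ] [IsProbabilityMeasure ν]
    (hμ : Integrable (fun x => ‖x‖) μ) (hν : Integrable (fun y => ‖y‖) ν)
    (H : ∀ ρ : Measure (EuclideanSpace ℝ (Fin d)), IsProbabilityMeasure ρ →
        (∃ R : ℝ, ρ (closedBall (0 : EuclideanSpace ℝ (Fin d)) R)ᶜ = 0) →
        OTcost μ ρ ≤ OTcost ν ρ)
    (a : ℕ → EuclideanSpace ℝ (Fin d)) (β0 : EuclideanSpace ℝ (Fin d) → ℝ) (n : ℕ) :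
    ∫ x, (⨆ i : Fin (n + 1), (⟪x, a i⟫ + β0 (a i))) ∂μ ≤
      ∫ x, (⨆ i : Fin (n + 1), (⟪x, a i⟫ + β0 (a i))) ∂ν := by
  classical
  set F : EuclideanSpace ℝ (Fin d) → ℝ :=
    fun x => ⨆ i : Fin (n + 1), (⟪x, a i⟫ + β0 (a i)) with hF
  have hFμ : Integrable F μ :=
    maxaff_integrable (fun i : Fin (n + 1) => a i) (fun i => β0 (a i)) hμ
  have hFν : Integrable F ν :=
    maxaff_integrable (fun i : Fin (n + 1) => a i) (fun i => β0 (a i)) hν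
  have hFm : Measurable F := maxaff_measurable (fun i : Fin (n + 1) => a i) (fun i => β0 (a i))
  have hFle : ∀ x k, k ≤ n → ⟪x, a k⟫ + β0 (a k) ≤ F x := fun x k hk =>
    le_maxaff (fun i : Fin (n + 1) => a i) (fun i => β0 (a i)) x ⟨k, by omega⟩
  have hex : ∀ x, ∃ k, k ≤ n ∧ F x = ⟪x, a k⟫ + β0 (a k) := by
    intro x
    obtain ⟨i, hi⟩ := exists_eq_ciSup_of_finite (f := fun i : Fin (n + 1) =>
      (⟪x, a i⟫ + β0 (a i) : ℝ))
    exact ⟨i, by omega, hi.symm⟩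
  set T : EuclideanSpace ℝ (Fin d) → ℕ := fun x => Nat.find (hex x) with hT
  have hTm : Measurable T := by
    refine measurable_find hex fun k => ?_
    exact (MeasurableSet.const _).inter (measurableSet_eq_fun hFm (by fun_prop))
  have hTn : ∀ x, T x ≤ n := fun x => (Nat.find_spec (hex x)).1
  have hTF : ∀ x, F x = ⟪x, a (T x)⟫ + β0 (a (T x)) := fun x => (Nat.find_spec (hex x)).2
  have hA : Measurable (fun x => a (T x)) := (measurable_from_nat (f := a)).comp hTm
  set S : Finset (EuclideanSpace ℝ (Fin d)) := (Finset.range (n + 1)).image a with hS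
  have hAS : ∀ x, a (T x) ∈ S := fun x =>
    Finset.mem_image_of_mem _ (Finset.mem_range.2 (by have := hTn x; omega))
  obtain ⟨β, hβm, hβb, hβS⟩ := exists_beta S β0
  set ρ := μ.map (fun x => a (T x)) with hρ
  have hρp : IsProbabilityMeasure ρ := Measure.isProbabilityMeasure_map hA.aemeasurable
  have hρS : ∀ᵐ y ∂ρ, y ∈ S := by
    refine (ae_map_iff hA.aemeasurable S.measurableSet).2 ?_
    exact Filter.Eventually.of_forall hAS
  obtain ⟨R, hR⟩ : ∃ R : ℝ, ρ (closedBall (0 : EuclideanSpace ℝ (Fin d)) R)ᶜ = 0 := by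
    refine ⟨∑ s ∈ S, ‖s‖, ?_⟩
    rw [← mem_ae_iff]
    filter_upwards [hρS] with y hy
    rw [mem_closedBall_zero_iff]
    exact Finset.single_le_sum (f := fun s => ‖s‖) (fun s _ => norm_nonneg _) hy
  have hβi : Integrable β ρ := beta_integrable ρ hβm hβb
  have hlow : ∫ x, F x ∂μ - ∫ y, β y ∂ρ ≤ OTcost μ ρ := by
    have hpm : Measurable (fun x : EuclideanSpace ℝ (Fin d) => (x, a (T x))) :=
      measurable_id.prodMk hA
    have hπ : μ.map (fun x => (x, a (T x))) ∈ Couplings μ ρ := by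
      constructor
      · rw [Measure.map_map measurable_fst hpm]
        exact Measure.map_id
      · rw [Measure.map_map measurable_snd hpm]
        rfl
    refine le_trans (le_of_eq ?_) (le_OTcost hμ hR hπ)
    have i1 := coupling_fst hπ hFμ
    have i2 := coupling_snd hπ hβi
    rw [← i1.2, ← i2.2, ← integral_sub i1.1 i2.1]
    refine integral_congr_ae ?_
    have hms : MeasurableSet {p : EuclideanSpace ℝ (Fin d) × EuclideanSpace ℝ (Fin d) |
        F p.1 - β p.2 = ⟪p.1, p.2⟫} :=
      measurableSet_eq_fun ((hFm.comp measurable_fst).sub (hβm.comp measurable_snd)) (by fun_prop)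
    refine (ae_map_iff hpm.aemeasurable hms).2 (Filter.Eventually.of_forall fun x => ?_)
    simp only [hTF x, hβS _ (hAS x)]
    ring
  have hup : OTcost ν ρ ≤ ∫ x, F x ∂ν - ∫ y, β y ∂ρ := by
    refine OTcost_le fun π hπ => ?_
    have i1 := coupling_fst hπ hFν
    have i2 := coupling_snd hπ hβi
    rw [← i1.2, ← i2.2, ← integral_sub i1.1 i2.1]
    refine integral_mono_ae (coupling_inner hν hR hπ).1 (i1.1.sub i2.1) ?_
    filter_upwards [coupling_snd_ae hπ hρS] with p hp
    obtain ⟨k, hk, hkp⟩ := Finset.mem_image.1 hp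
    have := hFle p.1 k (by have := Finset.mem_range.1 hk; omega)
    rw [hkp] at this
    simp only [hβS _ hp]
    linarith
  have := H ρ hρp ⟨R, hR⟩
  linarith

theorem backward_dir (μ ν : Measure (EuclideanSpace ℝ (Fin d)))
    [IsProbabilityMeasure μ] [IsProbabilityMeasure ν]
    (hμ : Integrable (fun x => ‖x‖) μ) (hν : Integrable (fun y => ‖y‖) ν)
    (H : ∀ ρ : Measure (EuclideanSpace ℝ (Fin d)), IsProbabilityMeasure ρ →
        (∃ R : ℝ, ρ (closedBall (0 : EuclideanSpace ℝ (Fin d)) R)ᶜ = 0) →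
        OTcost μ ρ ≤ OTcost ν ρ) : ConvexOrder μ ν := by
  intro f hf hfμ hfν
  have hfc : Continuous f := by
    have := hf.continuousOn isOpen_univ
    rwa [continuousOn_univ] at this
  obtain ⟨l, c, hlc, hsup⟩ := hf.real_univ_sSup_of_nat_affine_eq hfc.lowerSemicontinuous
  set a : ℕ → EuclideanSpace ℝ (Fin d) :=
    fun n => (InnerProductSpace.toDual ℝ (EuclideanSpace ℝ (Fin d))).symm (l n) with ha
  have hal : ∀ n x, (⟪x, a n⟫ : ℝ) = l n x := fun n x => by
    rw [real_inner_comm]; simp [ha]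
  have hlc' : ∀ n x, ⟪x, a n⟫ + c n ≤ f x := fun n x => by
    have := hlc n x
    rw [hal]; simpa using this
  set β0 : EuclideanSpace ℝ (Fin d) → ℝ := fun s => ⨅ x, (f x - ⟪x, s⟫) with hβ0
  have hbdd : ∀ n, BddBelow (Set.range fun x => f x - (⟪x, a n⟫ : ℝ)) := by
    intro n
    refine ⟨c n, ?_⟩
    rintro _ ⟨x, rfl⟩
    have := hlc' n x
    simp only
    linarith
  have hcβ : ∀ n, c n ≤ β0 (a n) := fun n => le_ciInf fun x => by
    have := hlc' n x; linarith
  have hβf : ∀ n x, ⟪x, a n⟫ + β0 (a n) ≤ f x := fun n x => by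
    have := ciInf_le (hbdd n) x
    simp only [hβ0]
    linarith
  set F : ℕ → EuclideanSpace ℝ (Fin d) → ℝ :=
    fun n x => ⨆ i : Fin (n + 1), (⟪x, a i⟫ + β0 (a i)) with hF
  have hFi : ∀ (α : Measure (EuclideanSpace ℝ (Fin d))) [IsProbabilityMeasure α],
      Integrable (fun x => ‖x‖) α → ∀ n, Integrable (F n) α := fun α _ hα n =>
    maxaff_integrable (fun i : Fin (n + 1) => a i) (fun i => β0 (a i)) hα
  have hFle : ∀ n x k, k ≤ n → ⟪x, a k⟫ + β0 (a k) ≤ F n x := fun n x k hk =>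
    le_maxaff (fun i : Fin (n + 1) => a i) (fun i => β0 (a i)) x ⟨k, by omega⟩
  have hmono : ∀ x, Monotone fun n => F n x := fun x m n hmn =>
    ciSup_le fun i => hFle n x i (by omega)
  have hlim : ∀ x, Filter.Tendsto (fun n => F n x) Filter.atTop (nhds (f x)) := by
    intro x
    refine tendsto_atTop_isLUB (hmono x) ⟨?_, ?_⟩
    · rintro _ ⟨n, rfl⟩
      exact ciSup_le fun i => hβf i x
    · intro r hr
      have h1 : f x = ⨆ n, (l n x + c n) := by
        rw [← hsup, iSup_apply]
        simp
      rw [h1]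
      refine ciSup_le fun n => ?_
      have h2 : F n x ≤ r := hr ⟨n, rfl⟩
      have h3 := hFle n x n le_rfl
      have h4 := hcβ n
      rw [hal] at h3
      linarith
  have t1 := integral_tendsto_of_tendsto_of_monotone (hFi μ hμ) hfμ
    (Filter.Eventually.of_forall hmono) (Filter.Eventually.of_forall hlim)
  have t2 := integral_tendsto_of_tendsto_of_monotone (hFi ν hν) hfν
    (Filter.Eventually.of_forall hmono) (Filter.Eventually.of_forall hlim)
  exact le_of_tendsto_of_tendsto' t1 t2 fun n => backward_fin μ ν hμ hν H a β0 n

end directions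

theorem stmt10 (d : ℕ) (hd : 1 ≤ d)
    (μ ν : Measure (EuclideanSpace ℝ (Fin d)))
    [IsProbabilityMeasure μ] [IsProbabilityMeasure ν]
    (hμ : Integrable (fun x => ‖x‖) μ) (hν : Integrable (fun y => ‖y‖) ν) :
    ConvexOrder μ ν ↔
      ∀ ρ : Measure (EuclideanSpace ℝ (Fin d)), IsProbabilityMeasure ρ →
        (∃ R : ℝ, ρ (closedBall (0 : EuclideanSpace ℝ (Fin d)) R)ᶜ = 0) →
        OTcost μ ρ ≤ OTcost ν ρ := by
  constructor
  · rintro h ρ hρ ⟨R, hR⟩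
    exact forward_dir μ ν hμ hν h ρ hR
  · exact backward_dir μ ν hμ hν
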